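/- arXiv:1907.11750 — 2 statements merged into one kernel-verified Lean document; each statement's English description precedes it below -/
import Mathlib

section
/- Let k = F_q be a finite field with a nontrivial additive character ψ, V a finite-dimensional k-vector space, and P: V → k a polynomial of degree d. Then the average E_{(h_1,...,h_d) ∈ V^d} ψ(P̃(h_1,...,h_d)) is at least q^{−pr(P̃)}; equivalently, the analytic rank satisfies ar(P) ≤ pr(P̃). -/
/-!
The argument uses only that `T = ∑ Q_i R_i` is a sum of products of multilinear forms.

Fix a block `a`. Summing over that block first, `T` is linear in it, so orthogonality of
characters gives `∑_x ψ(T x) = #{x | T vanishes identically in the block a}`. In each product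
one of the two factors does not depend on the block `a`; call it `g_i`. If all `g_i` vanish
at `x`, then `T` vanishes identically in the block `a` at `x`. So it suffices that `r`
multilinear forms, each on a nonempty set of blocks, have at least `|V|^d / q^r` common zeros
(`card_common_zeros`). This follows by induction on the set of blocks involved: for fixed values
of the other blocks, the `s` forms involving a given block are linear in it and so vanish
simultaneously on a subspace of density at least `q^{-s}`, while the remaining `r - s` forms do
not depend on it. Both steps average over one block at a time with `sum_update`.
-/


open MvPolynomial
open scoped ENat

noncomputable section

/-- The multilinear symmetric form `P̃` associated with `P`, as a polynomial on `V^d`: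
`P̃(h_1,…,h_d) = ∑_{S ⊆ {1,…,d}} (-1)^{d-|S|} P(∑_{i∈S} h_i)`. -/
def tilde {F : Type*} [Field F] {n : ℕ} (d : ℕ) (P : MvPolynomial (Fin n) F) :
    MvPolynomial (Fin d × Fin n) F :=
  ∑ S : Finset (Fin d),
    (-1 : MvPolynomial (Fin d × Fin n) F) ^ (d - S.card) *
      MvPolynomial.aeval (fun j : Fin n => ∑ i ∈ S, MvPolynomial.X (i, j)) P

/-- A polynomial on `V^d` is a multilinear form in the blocks of variables indexed by `J`
(and does not depend on the other blocks): every monomial has degree exactly one in each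
block from `J` and degree zero in every other block. -/
def IsMultilinearOn {F : Type*} [Field F] {d n : ℕ} (J : Finset (Fin d))
    (Q : MvPolynomial (Fin d × Fin n) F) : Prop :=
  ∀ m ∈ Q.support, ∀ i : Fin d, (∑ j : Fin n, m (i, j)) = if i ∈ J then 1 else 0

/-- `T` is a sum of `r` products `Q_i · R_i`, where `Q_i` is a multilinear form in the blocks
from a proper nonempty subset `J_i` of the coordinates and `R_i` is a multilinear form in the
complementary blocks. -/
def PDecomp {F : Type*} [Field F] {d n : ℕ} (T : MvPolynomial (Fin d × Fin n) F) (r : ℕ) :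
    Prop :=
  ∃ (J : Fin r → Finset (Fin d)) (Q R : Fin r → MvPolynomial (Fin d × Fin n) F),
    (∀ i, J i ≠ ∅) ∧ (∀ i, J i ≠ Finset.univ) ∧
    (∀ i, IsMultilinearOn (J i) (Q i)) ∧ (∀ i, IsMultilinearOn (J i)ᶜ (R i)) ∧
    T = ∑ i, Q i * R i

/-- `f` behaves as a multilinear form in the blocks from `J` and does not depend on the others. -/
def IsMultilinearFun {F : Type*} [Field F] {d n : ℕ} (J : Finset (Fin d))
    (f : (Fin d → Fin n → F) → F) : Prop :=
  ∀ x a, (a ∉ J → ∀ v, f (Function.update x a v) = f x) ∧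
    (a ∈ J → ∃ L : (Fin n → F) →ₗ[F] F, ∀ v, f (Function.update x a v) = L v)

/-- Resampling one coordinate does not change a sum over all points, up to the factor `|V|`. -/
lemma sum_update {ι V M : Type*} [Fintype ι] [DecidableEq ι] [Fintype V] [AddCommMonoid M]
    (a : ι) (g : (ι → V) → M) :
    ∑ x : ι → V, ∑ v : V, g (Function.update x a v) = Fintype.card V • ∑ x, g x := by
  let e : (ι → V) × V ≃ (ι → V) × V :=
    { toFun := fun p => (Function.update p.1 a p.2, p.1 a)
      invFun := fun p => (Function.update p.1 a p.2, p.1 a)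
      left_inv := fun p => by simp
      right_inv := fun p => by simp }
  calc ∑ x : ι → V, ∑ v : V, g (Function.update x a v)
      = ∑ p : (ι → V) × V, g (e p).1 := by rw [Fintype.sum_prod_type]; rfl
    _ = ∑ p : (ι → V) × V, g p.1 := Equiv.sum_comp e (fun p => g p.1)
    _ = _ := by
      rw [Fintype.sum_prod_type, Finset.smul_sum]
      simp [Finset.sum_const]

/-- The common kernel of `s` linear forms has density at least `q^{-s}`. -/
lemma card_common_ker {F ι V : Type*} [Field F] [Fintype F] [DecidableEq F] [AddCommGroup V]
    [Module F V] [Fintype V] (s : Finset ι) (L : ι → V →ₗ[F] F) :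
    Fintype.card V ≤
      (Finset.univ.filter fun v : V => ∀ i ∈ s, L i v = 0).card * Fintype.card F ^ s.card := by
  classical
  let φ : V →ₗ[F] (s → F) := LinearMap.pi fun i => L i
  have h1 := φ.toAddMonoidHom.ker.card_mul_index
  rw [AddSubgroup.index_ker] at h1
  have h2 : Nat.card φ.toAddMonoidHom.range ≤ Fintype.card F ^ s.card := by
    refine (Nat.card_le_card_of_injective _ Subtype.val_injective).trans ?_
    simp
  have h3 : Nat.card φ.toAddMonoidHom.ker =
      (Finset.univ.filter fun v : V => ∀ i ∈ s, L i v = 0).card := by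
    rw [← Fintype.card_subtype, ← Nat.card_eq_fintype_card]
    refine Nat.card_congr (Equiv.subtypeEquivRight fun v => ?_)
    simp [AddMonoidHom.mem_ker, φ, funext_iff]
  rw [← Nat.card_eq_fintype_card, ← h1, h3]
  exact Nat.mul_le_mul_left _ h2

/-- `s` multilinear forms, each on a nonempty set of blocks, vanish simultaneously on a set of
density at least `q^{-s}`. -/
lemma card_common_zeros {F ι : Type*} [Field F] [Fintype F] [DecidableEq F] {d n : ℕ}
    (J : ι → Finset (Fin d)) (f : ι → (Fin d → Fin n → F) → F)
    (hf : ∀ i, IsMultilinearFun (J i) (f i)) (hJ : ∀ i, J i ≠ ∅) (A : Finset (Fin d)) :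
    ∀ s : Finset ι, (∀ i ∈ s, J i ⊆ A) →
      Fintype.card (Fin d → Fin n → F) ≤
        (Finset.univ.filter fun x : Fin d → Fin n → F => ∀ i ∈ s, f i x = 0).card *
          Fintype.card F ^ s.card := by
  classical
  induction A using Finset.induction_on with
  | empty =>
    intro s hs
    have : s = ∅ := Finset.eq_empty_of_forall_notMem fun i hi =>
      hJ i (Finset.subset_empty.1 (hs i hi))
    subst this
    simp
  | insert a A ha ih =>
    intro s hs
    set s1 := s.filter fun i => a ∈ J i with hs1
    set s0 := s.filter fun i => a ∉ J i with hs0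
    have hcard : s1.card + s0.card = s.card := Finset.card_filter_add_card_filter_not _
    have h0 := ih s0 fun i hi => by
      rw [hs0, Finset.mem_filter] at hi
      exact (Finset.subset_insert_iff_of_notMem hi.2).1 (hs i hi.1)
    set q := Fintype.card F
    have hV : 0 < Fintype.card (Fin n → F) := Fintype.card_pos
    -- For each zero `x` of the forms in `s0`, resample the block `a`.
    have key : (Finset.univ.filter fun x : Fin d → Fin n → F => ∀ i ∈ s0, f i x = 0).card ≤
        (Finset.univ.filter fun x : Fin d → Fin n → F => ∀ i ∈ s, f i x = 0).card * q ^ s1.card := by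
      refine Nat.le_of_mul_le_mul_left ?_ hV
      rw [Finset.card_filter, Finset.card_filter, ← mul_assoc, ← smul_eq_mul (Fintype.card (Fin n → F))
        (∑ x : Fin d → Fin n → F, if ∀ i ∈ s, f i x = 0 then 1 else 0), ← sum_update a, Finset.mul_sum,
        Finset.sum_mul]
      refine Finset.sum_le_sum fun x _ => ?_
      by_cases hx : ∀ i ∈ s0, f i x = 0
      · rw [if_pos hx, mul_one, ← Finset.card_filter]
        have hL : ∀ i, ∃ L : (Fin n → F) →ₗ[F] F, a ∈ J i → ∀ v, f i (Function.update x a v) = L v := by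
          intro i
          by_cases hi : a ∈ J i
          · obtain ⟨L, hL⟩ := (hf i x a).2 hi
            exact ⟨L, fun _ => hL⟩
          · exact ⟨0, fun h => absurd h hi⟩
        choose L hL using hL
        refine (card_common_ker s1 L).trans (Nat.mul_le_mul_right _ (Finset.card_le_card ?_))
        intro v hv
        rw [Finset.mem_filter] at hv ⊢
        refine ⟨hv.1, fun i hi => ?_⟩
        by_cases hai : a ∈ J i
        · rw [hL i hai]
          exact hv.2 i (Finset.mem_filter.2 ⟨hi, hai⟩)
        · rw [(hf i x a).1 hai]
          exact hx i (Finset.mem_filter.2 ⟨hi, hai⟩)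
      · rw [if_neg hx]
        simp
    calc _ ≤ _ := h0
      _ ≤ _ := Nat.mul_le_mul_right _ key
      _ = _ := by rw [mul_assoc, ← pow_add, hcard]

lemma sum_char_linear {F V : Type*} [Field F] [AddCommGroup V] [Module F V] [Fintype V]
    (ψ : AddChar F ℂ) (hψ : ψ ≠ 1) (L : V →ₗ[F] F) [Decidable (∀ v, L v = 0)] :
    ∑ v, ψ (L v) = if ∀ v, L v = 0 then (Fintype.card V : ℂ) else 0 := by
  classical
  split_ifs with h
  · simp [h]
  · have h' := AddChar.sum_eq_zero_of_ne_one (ψ := ψ.compAddMonoidHom L.toAddMonoidHom) ?_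
    · simpa using h'
    · intro h1
      push Not at h
      obtain ⟨v, hv⟩ := h
      refine hψ (DFunLike.ext _ _ fun c => ?_)
      have := DFunLike.congr_fun h1 ((c / L v) • v)
      simpa [hv] using this

/-- Orthogonality of characters: for `T` linear in the block `a`, the character sum counts the
points at which `T` vanishes identically in that block. -/
lemma sum_char_eq_card {F : Type*} [Field F] [Fintype F] [DecidableEq F] {d n : ℕ}
    (ψ : AddChar F ℂ) (hψ : ψ ≠ 1) (T : (Fin d → Fin n → F) → F) (a : Fin d)
    (hT : ∀ x, ∃ L : (Fin n → F) →ₗ[F] F, ∀ v, T (Function.update x a v) = L v) :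
    ∑ x, ψ (T x) =
      ((Finset.univ.filter fun x : Fin d → Fin n → F =>
        ∀ v, T (Function.update x a v) = 0).card : ℂ) := by
  have hV : (Fintype.card (Fin n → F) : ℂ) ≠ 0 := Nat.cast_ne_zero.2 Fintype.card_ne_zero
  refine mul_left_cancel₀ hV ?_
  rw [← nsmul_eq_mul, ← sum_update a, Finset.card_filter, Nat.cast_sum, Finset.mul_sum]
  refine Finset.sum_congr rfl fun x _ => ?_
  obtain ⟨L, hL⟩ := hT x
  simp only [hL]
  rw [sum_char_linear ψ hψ L]
  split_ifs <;> simp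

lemma exists_linear_sum {F V ι : Type*} [Field F] [AddCommGroup V] [Module F V] (s : Finset ι)
    (g : ι → V → F) (h : ∀ i ∈ s, ∃ L : V →ₗ[F] F, ∀ v, g i v = L v) :
    ∃ L : V →ₗ[F] F, ∀ v, ∑ i ∈ s, g i v = L v := by
  choose! L hL using h
  exact ⟨∑ i ∈ s, L i, fun v => by
    rw [LinearMap.sum_apply]; exact Finset.sum_congr rfl fun i hi => hL i hi v⟩

lemma IsMultilinearOn.isMultilinearFun {F : Type*} [Field F] {d n : ℕ} {J : Finset (Fin d)}
    {Q : MvPolynomial (Fin d × Fin n) F} (hQ : IsMultilinearOn J Q) :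
    IsMultilinearFun J fun x => MvPolynomial.eval (fun p => x p.1 p.2) Q := by
  classical
  intro x a
  -- Separate the variables of the block `a` in each monomial.
  have expand : ∀ v, MvPolynomial.eval (fun p => Function.update x a v p.1 p.2) Q =
      ∑ m ∈ Q.support, Q.coeff m *
        ((∏ j, v j ^ m (a, j)) * ∏ i ∈ Finset.univ.erase a, ∏ j, x i j ^ m (i, j)) := by
    intro v
    rw [MvPolynomial.eval_eq']
    refine Finset.sum_congr rfl fun m _ => ?_
    rw [Fintype.prod_prod_type, ← Finset.mul_prod_erase _ _ (Finset.mem_univ a)]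
    congr 2
    · simp
    · refine Finset.prod_congr rfl fun i hi => ?_
      simp [Function.update_of_ne (Finset.ne_of_mem_erase hi)]
  refine ⟨fun ha v => ?_, fun ha => ?_⟩
  · have e2 := expand (x a)
    rw [Function.update_eq_self] at e2
    simp only [expand, e2]
    refine Finset.sum_congr rfl fun m hm => ?_
    have h0 := hQ m hm a
    rw [if_neg ha, Finset.sum_eq_zero_iff] at h0
    congr 2
    refine Finset.prod_congr rfl fun j hj => ?_
    rw [h0 j hj, pow_zero, pow_zero]
  · simp only [expand]
    refine exists_linear_sum _ _ fun m hm => ?_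
    have h1 := hQ m hm a
    rw [if_pos ha] at h1
    obtain ⟨j, hj, hne⟩ : ∃ j, m (a, j) = 1 ∧ ∀ k, k ≠ j → m (a, k) = 0 := by
      obtain ⟨j, _, hj⟩ := Finset.exists_ne_zero_of_sum_ne_zero (h1.trans_ne one_ne_zero)
      have hsplit := Finset.add_sum_erase Finset.univ (fun k => m (a, k)) (Finset.mem_univ j)
      simp only [h1] at hsplit
      have hrest : ∑ k ∈ Finset.univ.erase j, m (a, k) = 0 := by omega
      refine ⟨j, by omega, fun k hk => ?_⟩
      exact Finset.sum_eq_zero_iff.1 hrest k (Finset.mem_erase.2 ⟨hk, Finset.mem_univ k⟩)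
    refine ⟨(Q.coeff m * ∏ i ∈ Finset.univ.erase a, ∏ j, x i j ^ m (i, j)) •
      LinearMap.proj j, fun v => ?_⟩
    rw [Finset.prod_eq_single j (fun k _ hk => by rw [hne k hk, pow_zero])
      (fun h => absurd (Finset.mem_univ j) h), hj, pow_one]
    simp only [LinearMap.smul_apply, LinearMap.proj_apply, smul_eq_mul]
    ring

/-- The character sum of `∑ f_i g_i` is bounded below by the number of common zeros of the `f_i`,
the factors that do not depend on the block `a`. -/
lemma exists_card_of_factors {F : Type*} [Field F] [Fintype F] {ψ : AddChar F ℂ} (hψ : ψ ≠ 1)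
    {ι : Type*} [Fintype ι] {d n : ℕ} (K : ι → Finset (Fin d)) (f g : ι → (Fin d → Fin n → F) → F)
    (a : Fin d) (hK : ∀ i, K i ≠ ∅) (haK : ∀ i, a ∉ K i)
    (hf : ∀ i, IsMultilinearFun (K i) (f i)) (hg : ∀ i, IsMultilinearFun (K i)ᶜ (g i)) :
    ∃ N : ℕ, ∑ x, ψ (∑ i, f i x * g i x) = (N : ℂ) ∧
      Fintype.card (Fin d → Fin n → F) ≤ N * Fintype.card F ^ Fintype.card ι := by
  classical
  have hT : ∀ x, ∃ L : (Fin n → F) →ₗ[F] F, ∀ v,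
      ∑ i, f i (Function.update x a v) * g i (Function.update x a v) = L v := by
    intro x
    refine exists_linear_sum _ _ fun i _ => ?_
    obtain ⟨L, hL⟩ := (hg i x a).2 (Finset.mem_compl.2 (haK i))
    exact ⟨f i x • L, fun v => by rw [(hf i x a).1 (haK i), hL]; rfl⟩
  have hsum := sum_char_eq_card ψ hψ (fun x => ∑ i, f i x * g i x) a hT
  refine ⟨_, hsum, ?_⟩
  have h := card_common_zeros K f hf hK Finset.univ Finset.univ fun i _ => Finset.subset_univ _
  rw [Finset.card_univ] at h
  refine le_trans h (Nat.mul_le_mul_right _ (Finset.card_le_card ?_))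
  intro x hx
  simp only [Finset.mem_filter, Finset.mem_univ, true_and, forall_const] at hx ⊢
  refine fun v => Finset.sum_eq_zero fun i _ => ?_
  rw [(hf i x a).1 (haK i), hx i, zero_mul]

lemma sum_uncurry {α β F M : Type*} [Fintype α] [Fintype β] [DecidableEq α] [DecidableEq β]
    [Fintype F] [AddCommMonoid M] (g : (α × β → F) → M) :
    ∑ h, g h = ∑ x : α → β → F, g fun p => x p.1 p.2 :=
  (Equiv.sum_comp (Equiv.curry α β F).symm g).symm

/-- In unnormalised form, the character sum of a sum of `r` products is a natural number at
least `|V|^d / q^r`. -/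
lemma PDecomp.exists_card {F : Type*} [Field F] [Fintype F] {ψ : AddChar F ℂ} (hψ : ψ ≠ 1)
    {d n r : ℕ} {T : MvPolynomial (Fin d × Fin n) F} (hT : PDecomp T r) :
    ∃ N : ℕ, ∑ h : Fin d × Fin n → F, ψ (MvPolynomial.eval h T) = (N : ℂ) ∧
      Fintype.card (Fin d × Fin n → F) ≤ N * Fintype.card F ^ r := by
  classical
  obtain ⟨J, Q, R, hJ0, hJ1, hQ, hR, rfl⟩ := hT
  rcases isEmpty_or_nonempty (Fin d) with hd | ⟨⟨a⟩⟩
  · -- Without blocks there is no nonempty `J i`, so the sum of products is empty.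
    have hr : IsEmpty (Fin r) := ⟨fun i => hJ0 i (Finset.eq_empty_of_isEmpty _)⟩
    refine ⟨1, by simp, ?_⟩
    have hq : 0 < Fintype.card F := Fintype.card_pos
    simpa using Nat.one_le_pow r _ hq
  have hcard : Fintype.card (Fin d × Fin n → F) = Fintype.card (Fin d → Fin n → F) :=
    Fintype.card_congr (Equiv.curry (Fin d) (Fin n) F)
  rw [sum_uncurry, hcard]
  -- Name the factors so that `f i` is the one not depending on the block `a`.
  have hsplit : ∀ i, ∃ (K : Finset (Fin d)) (f g : (Fin d → Fin n → F) → F),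
      K ≠ ∅ ∧ a ∉ K ∧ IsMultilinearFun K f ∧ IsMultilinearFun Kᶜ g ∧
      ∀ x : Fin d → Fin n → F,
        MvPolynomial.eval (fun p => x p.1 p.2) (Q i * R i) = f x * g x := by
    intro i
    have hQ' := IsMultilinearOn.isMultilinearFun (hQ i)
    have hR' := IsMultilinearOn.isMultilinearFun (hR i)
    by_cases ha : a ∈ J i
    · rw [← compl_compl (J i)] at hQ'
      refine ⟨(J i)ᶜ, _, _, by simpa using hJ1 i, by simpa using ha, hR', hQ', fun x => ?_⟩
      rw [map_mul, mul_comm]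
    · refine ⟨J i, _, _, hJ0 i, ha, hQ', hR', fun x => ?_⟩
      rw [map_mul]
  choose K f g hK haK hf hg hfg using hsplit
  have hT : ∀ x : Fin d → Fin n → F, MvPolynomial.eval (fun p => x p.1 p.2)
      (∑ i, Q i * R i) = ∑ i, f i x * g i x := fun x => by
    rw [map_sum]; exact Finset.sum_congr rfl fun i _ => hfg i x
  simp only [hT]
  have h := exists_card_of_factors hψ K f g a hK haK hf hg
  rw [Fintype.card_fin] at h
  exact h

/-- `E_{h ∈ V^d} ψ(P̃(h)) ≥ q^{-pr(P̃)}`, i.e. `ar(P) ≤ pr(P̃)`.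
(The bound is stated for every `r` such that `P̃` admits a partition-rank decomposition
with `r` terms; in particular for `r = pr(P̃)`.) -/
theorem stmt4 (F : Type*) [Field F] [Fintype F] (ψ : AddChar F ℂ) (hψ : ψ ≠ 1)
    (n d : ℕ) (P : MvPolynomial (Fin n) F) (hdeg : P.totalDegree = d) :
    ∀ r : ℕ, PDecomp (tilde d P) r →
      (Fintype.card F : ℝ) ^ (-(r : ℝ)) ≤
        ((∑ h : Fin d × Fin n → F, ψ (MvPolynomial.eval h (tilde d P))) /
          (Fintype.card (Fin d × Fin n → F) : ℂ)).re := by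
  intro r hr
  obtain ⟨N, hN, hle⟩ := hr.exists_card hψ
  rw [hN]
  have hcast : ((N : ℂ) / (Fintype.card (Fin d × Fin n → F) : ℂ)).re =
      (N : ℝ) / (Fintype.card (Fin d × Fin n → F) : ℝ) := by
    rw [← Complex.ofReal_natCast, ← Complex.ofReal_natCast, ← Complex.ofReal_div,
      Complex.ofReal_re]
  have hq : (0 : ℝ) < (Fintype.card F : ℝ) ^ r :=
    pow_pos (Nat.cast_pos.2 Fintype.card_pos) r
  have hV : (0 : ℝ) < (Fintype.card (Fin d × Fin n → F) : ℝ) :=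
    Nat.cast_pos.2 Fintype.card_pos
  rw [hcast, Real.rpow_neg (Nat.cast_nonneg _), Real.rpow_natCast, le_div_iff₀ hV,
    inv_mul_le_iff₀ hq, mul_comm]
  exact_mod_cast hle
end
end

section
/- Let F_q be a finite field, V a finite-dimensional F_q-vector space, and T: V^d → F_q a multilinear form. Then for every nontrivial additive character ψ: F_q → ℂ*, the bias b(T) = q^{−d·dim V} Σ_{v∈V^d} ψ(T(v)) is a nonnegative real number, and its value does not depend on the choice of the nontrivial additive character ψ. -/
/-!
The value of a multilinear form with all arguments but the first fixed is a linear functional of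
the first argument. Summing a nontrivial additive character over the values of a linear functional
`L : V → F` gives `|V|` if `L = 0`, and `0` otherwise, since then `L` is surjective and the pullback
of the character is a nontrivial character of `V` (`sum_addChar_linear`). Hence the whole character
sum is `|V|` times the number of choices of the last `d - 1` arguments for which the functional
vanishes (`sum_addChar_multilinear`): a natural number in which the character does not occur.
-/

/-- Orthogonality of characters, pulled back along a linear functional. -/
theorem sum_addChar_linear {F V : Type*} [Field F] [AddCommGroup V] [Module F V] [Fintype V]
    (L : V →ₗ[F] F) (ψ : AddChar F ℂ) (hψ : ψ ≠ 1) [Decidable (L = 0)] :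
    ∑ x, ψ (L x) = if L = 0 then (Fintype.card V : ℂ) else 0 := by
  split_ifs with hL
  · simp [hL]
  · have hne : ψ.compAddMonoidHom L.toAddMonoidHom ≠ 1 := by
      intro h
      apply hψ
      ext a
      obtain ⟨x, rfl⟩ := LinearMap.surjective hL a
      simpa using DFunLike.congr_fun h x
    simpa using AddChar.sum_eq_zero_of_ne_one hne

open Classical in
/-- For fixed `w`, the linear functional `x ↦ T (x, w)` is encoded as the restriction of `T` to its
first argument, based at `(0, w)`. -/
theorem sum_addChar_multilinear {F V : Type*} [Field F] [AddCommGroup V] [Module F V] [Fintype V]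
    (n : ℕ) (T : MultilinearMap F (fun _ : Fin (n + 1) => V) F)
    (ψ : AddChar F ℂ) (hψ : ψ ≠ 1) :
    ∑ v : Fin (n + 1) → V, ψ (T v) =
      ((Finset.univ.filter fun w : Fin n → V =>
        T.toLinearMap (Fin.cons 0 w) 0 = 0).card * Fintype.card V : ℕ) := by
  rw [← (Fin.consEquiv fun _ : Fin (n + 1) => V).sum_comp, Fintype.sum_prod_type_right]
  have h (w : Fin n → V) : ∑ x : V, ψ (T (Fin.consEquiv (fun _ : Fin (n + 1) => V) (x, w))) =
      if T.toLinearMap (Fin.cons 0 w) 0 = 0 then (Fintype.card V : ℂ) else 0 := by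
    rw [← sum_addChar_linear _ ψ hψ]
    simp [Fin.consEquiv, Fin.update_cons_zero]
  simp only [h]
  rw [← Finset.sum_filter, Finset.sum_const, nsmul_eq_mul, Nat.cast_mul]

/-- the bias of a multilinear form `T : V^d → F_q` is a nonnegative real
number, independent of the choice of nontrivial additive character. -/
theorem stmt16 (F : Type*) [Field F] [Fintype F] (d : ℕ) (hd : 0 < d)
    (V : Type*) [AddCommGroup V] [Module F V] [Fintype V]
    (T : MultilinearMap F (fun _ : Fin d => V) F)
    (ψ : AddChar F ℂ) (hψ : ψ ≠ 1) :
    (∃ r : ℝ, 0 ≤ r ∧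
      (∑ v : Fin d → V, ψ (T v)) / (Fintype.card (Fin d → V) : ℂ) = (r : ℂ)) ∧
    ∀ ψ' : AddChar F ℂ, ψ' ≠ 1 →
      (∑ v : Fin d → V, ψ' (T v)) / (Fintype.card (Fin d → V) : ℂ) =
        (∑ v : Fin d → V, ψ (T v)) / (Fintype.card (Fin d → V) : ℂ) := by
  classical
  obtain ⟨n, rfl⟩ := Nat.exists_eq_add_one.mpr hd
  refine ⟨?_, fun ψ' hψ' => ?_⟩
  · rw [sum_addChar_multilinear n T ψ hψ]
    generalize (_ * _ : ℕ) = N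
    exact ⟨N / Fintype.card (Fin (n + 1) → V), by positivity, by push_cast; rfl⟩
  · rw [sum_addChar_multilinear n T ψ hψ, sum_addChar_multilinear n T ψ' hψ']
end
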